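/- Let k ≥ 2 be an integer and define the polynomial Y_k(z) = (π^{2k}/(2k)!) ∑_{j=0}^{k} B_{2j} B_{2k−2j} (2^{2j}−1)(2^{2k−2j}−1) C(2k,2j) z^j. Then every non-zero complex root of Y_k lies on the unit circle (has absolute value 1), and all roots of Y_k are simple. -/

import Mathlib

/-- The polynomial
`Y_k(z) = (π^{2k}/(2k)!) ∑_{j=0}^{k} B_{2j} B_{2k−2j} (2^{2j}−1)(2^{2k−2j}−1) C(2k,2j) z^j`,
viewed as a polynomial over `ℂ`. -/
noncomputable def Ypoly (k : ℕ) : Polynomial ℂ :=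
  Polynomial.C ((Real.pi ^ (2 * k) / (Nat.factorial (2 * k)) : ℝ) : ℂ) *
    ∑ j ∈ Finset.range (k + 1),
      Polynomial.C (((bernoulli (2 * j) : ℚ) : ℂ) * ((bernoulli (2 * k - 2 * j) : ℚ) : ℂ)
        * ((2 : ℂ) ^ (2 * j) - 1) * ((2 : ℂ) ^ (2 * k - 2 * j) - 1)
        * ((Nat.choose (2 * k) (2 * j)) : ℂ)) * Polynomial.X ^ j

namespace YAux
open Finset

lemma abel_aux (a s : ℕ → ℝ) (n : ℕ) :
    ∑ i ∈ range (n+1), a i * (s i - s (i+1)) =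
      a 0 * s 0 - a n * s (n+1) + ∑ i ∈ range n, (a (i+1) - a i) * s (i+1) := by
  induction n with
  | zero => simp; ring
  | succ n ih => rw [sum_range_succ, ih, sum_range_succ]; ring

noncomputable def GG (a : ℕ → ℝ) (n : ℕ) (t : ℝ) : ℝ :=
  ∑ i ∈ range (n+1), a i * Real.cos (((n:ℝ)/2 - i) * t)

lemma GG_mul (a : ℕ → ℝ) (n : ℕ) (hs : a n = a 0) (t : ℝ) :
    2 * Real.sin (t/2) * GG a n t = 2 * a 0 * Real.sin (((n:ℝ)+1)/2*t) +
      ∑ i ∈ range n, (a (i+1) - a i) * Real.sin ((((n:ℝ)+1)/2 - (i+1:ℕ)) * t) := by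
  have h := abel_aux a (fun i => Real.sin ((((n:ℝ)+1)/2 - (i:ℕ)) * t)) n
  have h2 : 2 * Real.sin (t/2) * GG a n t = ∑ i ∈ range (n+1), a i *
      (Real.sin ((((n:ℝ)+1)/2 - (i:ℕ)) * t) - Real.sin ((((n:ℝ)+1)/2 - (i+1:ℕ)) * t)) := by
    rw [GG, mul_sum]
    refine sum_congr rfl fun i _ => ?_
    rw [Real.sin_sub_sin]
    have e1 : ((((n:ℝ)+1)/2 - (i:ℕ)) * t - (((n:ℝ)+1)/2 - (i+1:ℕ)) * t)/2 = t/2 := by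
      push_cast; ring
    have e2 : ((((n:ℝ)+1)/2 - (i:ℕ)) * t + (((n:ℝ)+1)/2 - (i+1:ℕ)) * t)/2 = ((n:ℝ)/2 - i) * t := by
      push_cast; ring
    rw [e1, e2]; ring
  rw [h2, h]
  have e3 : Real.sin ((((n:ℝ)+1)/2 - (n+1:ℕ)) * t) = - Real.sin (((n:ℝ)+1)/2*t) := by
    rw [← Real.sin_neg]; congr 1; push_cast; ring
  simp only [e3, hs]
  simp only [Nat.cast_zero, sub_zero]
  ring

noncomputable def th (n l : ℕ) : ℝ := (2*l+1) * Real.pi / (n+1)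

lemma GG_sign (a : ℕ → ℝ) (n : ℕ) (hs : a n = a 0)
    (hv : ∑ i ∈ range n, |a (i+1) - a i| < 2 * a 0) (l : ℕ) (hl : l ≤ n) :
    0 < (-1)^l * GG a n (th n l) := by
  have h := GG_mul a n hs (th n l)
  have hn : (0:ℝ) < n + 1 := by positivity
  have hl' : (l:ℝ) ≤ n := by exact_mod_cast hl
  have e1 : Real.sin (((n:ℝ)+1)/2*th n l) = (-1)^l := by
    have : ((n:ℝ)+1)/2*th n l = Real.pi/2 + l * Real.pi := by
      unfold th; field_simp; ring
    rw [this, Real.sin_add_nat_mul_pi, Real.sin_pi_div_two, mul_one]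
  have hpos : 0 < Real.sin (th n l / 2) := by
    apply Real.sin_pos_of_pos_of_lt_pi
    · unfold th; positivity
    · unfold th
      rw [div_div, div_lt_iff₀ (by positivity)]
      nlinarith [Real.pi_pos]
  rw [e1] at h
  have hb : |∑ i ∈ range n, (a (i+1) - a i) * Real.sin ((((n:ℝ)+1)/2 - (i+1:ℕ)) * th n l)|
      < 2 * a 0 := by
    refine lt_of_le_of_lt ((abs_sum_le_sum_abs _ _).trans (sum_le_sum fun i _ => ?_)) hv
    rw [abs_mul]
    exact mul_le_of_le_one_right (abs_nonneg _) (Real.abs_sin_le_one _)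
  rw [abs_lt] at hb
  have : 0 < 2 * Real.sin (th n l/2) * ((-1)^l * GG a n (th n l)) := by
    rcases neg_one_pow_eq_or ℝ l with e | e <;> rw [e] at h ⊢ <;> nlinarith
  exact pos_of_mul_pos_right this (by positivity)

lemma GG_root (a : ℕ → ℝ) (n : ℕ) (hs : a n = a 0)
    (hv : ∑ i ∈ range n, |a (i+1) - a i| < 2 * a 0) (l : ℕ) (hl : l < n) :
    ∃ t ∈ Set.Ioo (th n l) (th n (l+1)), GG a n t = 0 := by
  have h1 := GG_sign a n hs hv l hl.le
  have h2 := GG_sign a n hs hv (l+1) hl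
  have hle : th n l ≤ th n (l+1) := by
    unfold th; push_cast; gcongr; linarith
  have hc : ContinuousOn (fun t => (-1)^l * GG a n t) (Set.Icc (th n l) (th n (l+1))) := by
    unfold GG; fun_prop
  obtain ⟨t, ht, e⟩ := intermediate_value_Ioo' hle hc (show (0:ℝ) ∈ _ from ⟨by
    rw [pow_succ] at h2; linarith, h1⟩)
  refine ⟨t, ht, ?_⟩
  simpa using e

lemma GG_exp (a : ℕ → ℝ) (n : ℕ) (hs : ∀ i ≤ n, a (n - i) = a i) (t : ℝ) (h : GG a n t = 0) :
    ∑ i ∈ range (n+1), (a i : ℂ) * Complex.exp (t * Complex.I) ^ i = 0 := by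
  have hS : ∑ i ∈ range (n+1), a i * Real.sin (((n:ℝ)/2 - i) * t) = 0 := by
    have := sum_range_reflect (fun i => a i * Real.sin (((n:ℝ)/2 - i) * t)) (n+1)
    have h2 : ∑ i ∈ range (n+1), a (n+1-1-i) * Real.sin (((n:ℝ)/2 - (n+1-1-i:ℕ)) * t)
       = - ∑ i ∈ range (n+1), a i * Real.sin (((n:ℝ)/2 - i) * t) := by
      rw [← sum_neg_distrib]
      refine sum_congr rfl fun i hi => ?_
      have hi' : i ≤ n := by simpa [Nat.lt_succ_iff] using hi
      rw [Nat.add_sub_cancel, hs i hi', Nat.cast_sub hi', ← mul_neg, ← Real.sin_neg]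
      congr 2; ring
    linarith
  have key : ∀ i ∈ range (n+1), (a i : ℂ) * Complex.exp (t * Complex.I) ^ i =
      Complex.exp (n/2 * t * Complex.I) * (((a i * Real.cos (((n:ℝ)/2 - i) * t) : ℝ) : ℂ) -
        ((a i * Real.sin (((n:ℝ)/2 - i) * t) : ℝ) : ℂ) * Complex.I) := by
    intro i _
    have e : Complex.exp (t * Complex.I) ^ i = Complex.exp (n/2 * t * Complex.I) *
        Complex.exp (((-(((n:ℝ)/2 - i) * t) : ℝ) : ℂ) * Complex.I) := by
      rw [← Complex.exp_nat_mul, ← Complex.exp_add]; congr 1; push_cast; ring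
    rw [e, Complex.exp_mul_I (((-(((n:ℝ)/2 - i) * t) : ℝ) : ℂ)), ← Complex.ofReal_cos, ← Complex.ofReal_sin, Real.cos_neg, Real.sin_neg]
    push_cast; ring
  rw [sum_congr rfl key, ← mul_sum, sum_sub_distrib, ← sum_mul, ← Complex.ofReal_sum,
    ← Complex.ofReal_sum, hS]
  unfold GG at h
  rw [h]; simp

lemma th_mono (n : ℕ) : Monotone (th n) := by
  intro i j h
  have : (i:ℝ) ≤ j := by exact_mod_cast h
  unfold th; gcongr

lemma exists_roots (a : ℕ → ℝ) (n : ℕ) (hs : ∀ i ≤ n, a (n - i) = a i)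
    (hv : ∑ i ∈ range n, |a (i+1) - a i| < 2 * a 0) :
    ∃ S : Finset ℂ, S.card = n ∧ ∀ z ∈ S, ‖z‖ = 1 ∧ ∑ i ∈ range (n+1), (a i : ℂ) * z ^ i = 0 := by
  have h0 : a n = a 0 := by simpa using hs 0 (Nat.zero_le n)
  choose! t ht hz using GG_root a n h0 hv
  refine ⟨(range n).image fun l => Complex.exp (t l * Complex.I), ?_, ?_⟩
  · rw [card_image_of_injOn, card_range]
    have hlt : ∀ i < n, ∀ j < n, i < j →
        Complex.exp (t i * Complex.I) ≠ Complex.exp (t j * Complex.I) := by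
      intro i hi j hj hij e
      have h1 : t i < t j := (ht i hi).2.trans_le ((th_mono n hij).trans (ht j hj).1.le)
      have h2 : 0 < t i := lt_of_le_of_lt (by unfold th; positivity) (ht i hi).1
      have h3 : t j < 2 * Real.pi := by
        refine (ht j hj).2.trans_le ((th_mono n (Nat.succ_le_of_lt hj)).trans ?_)
        unfold th
        rw [div_le_iff₀ (by positivity)]
        nlinarith [Real.pi_pos]
      rw [Complex.exp_eq_exp_iff_exists_int] at e
      obtain ⟨m, hm⟩ := e
      have hm' : t i = t j + m * (2 * Real.pi) := by
        have := congrArg Complex.im hm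
        simpa using this
      have hp := Real.pi_pos
      have m1 : (m:ℝ) < 0 := by by_contra hc; push Not at hc; nlinarith
      have m2 : (-1:ℝ) < m := by by_contra hc; push Not at hc; nlinarith
      have m1' : m < 0 := by exact_mod_cast m1
      have m2' : -1 < m := by exact_mod_cast m2
      omega
    intro i hi j hj e
    simp only [coe_range, Set.mem_Iio] at hi hj
    rcases lt_trichotomy i j with h | h | h
    · exact (hlt i hi j hj h e).elim
    · exact h
    · exact (hlt j hj i hi h e.symm).elim
  · intro z hz'
    simp only [mem_image, mem_range] at hz'
    obtain ⟨l, hl, rfl⟩ := hz'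
    exact ⟨Complex.norm_exp_ofReal_mul_I _, GG_exp a n hs _ (hz l hl)⟩

/-- odd zeta values -/
noncomputable def LL (j : ℕ) : ℝ :=
  (-1)^(j+1) * (bernoulli (2*j) : ℝ) * (2^(2*j) - 1) * Real.pi^(2*j) / (2 * (2*j).factorial)

lemma LL_hasSum (j : ℕ) (hj : j ≠ 0) :
    HasSum (fun n : ℕ => 1 / (2*(n:ℝ)+1)^(2*j)) (LL j) := by
  have h := hasSum_zeta_nat hj
  set Z := ((-1:ℝ)^(j+1) * 2^(2*j-1) * Real.pi^(2*j) * bernoulli (2*j) / (2*j).factorial) with hZ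
  have hev : HasSum (fun n : ℕ => 1 / (((2*n:ℕ):ℝ))^(2*j)) (Z / 2^(2*j)) := by
    have := h.div_const (2^(2*j))
    have e : (fun n : ℕ => 1 / (((2*n:ℕ):ℝ))^(2*j)) =
        fun n : ℕ => 1 / (n:ℝ)^(2*j) / 2^(2*j) := by
      funext n
      push_cast; rw [mul_pow, div_div, mul_comm]
    rw [e]; exact this
  have hsod : Summable (fun n : ℕ => 1 / (((2*n+1:ℕ):ℝ))^(2*j)) :=
    h.summable.comp_injective (i := fun n => 2*n+1) (fun a b e => by simpa using e)
  have hall := HasSum.even_add_odd (f := fun n : ℕ => 1 / (n:ℝ)^(2*j)) hev hsod.hasSum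
  have he := hall.unique h
  have : ∑' n : ℕ, 1 / (((2*n+1:ℕ):ℝ))^(2*j) = LL j := by
    have : LL j = Z - Z / 2^(2*j) := by
      rw [hZ, LL]
      have : (2:ℝ)^(2*j) = 2 * 2^(2*j-1) := by rw [← pow_succ']; congr 1; omega
      rw [this]; field_simp
    linarith
  rw [← this]
  convert hsod.hasSum using 3 with n
  push_cast; rfl

lemma LL_ge (j : ℕ) (hj : j ≠ 0) : 1 ≤ LL j := by
  have := le_hasSum (LL_hasSum j hj) 0 (fun n _ => by positivity)
  simpa using this

lemma LL_anti (j : ℕ) (hj : j ≠ 0) : LL (j+1) ≤ LL j := by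
  refine hasSum_le (fun n => ?_) (LL_hasSum (j+1) (by omega)) (LL_hasSum j hj)
  apply one_div_le_one_div_of_le (by positivity)
  exact pow_le_pow_right₀ (by linarith [(Nat.cast_nonneg n : (0:ℝ) ≤ n)]) (by omega)

lemma LL_one : LL 1 < 2 := by
  have : LL 1 = Real.pi^2/8 := by
    simp [LL, bernoulli_two]; ring
  rw [this]
  nlinarith [Real.pi_lt_four, Real.pi_pos]

lemma LL_le (j : ℕ) : LL (j+1) ≤ LL 1 := by
  induction j with
  | zero => exact le_rfl
  | succ j ih => exact (LL_anti _ (by omega)).trans ih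

lemma LL_var (n : ℕ) : ∑ i ∈ range n, |LL (i+1+1) * LL (n - (i+1) + 1) - LL (i+1) * LL (n-i+1)|
    < 2 * (LL 1 * LL (n+1)) := by
  have h1 : ∀ i ∈ range n, |LL (i+1+1) * LL (n - (i+1) + 1) - LL (i+1) * LL (n-i+1)| ≤
      LL 1 * (LL (i+1) - LL (i+1+1)) + LL 1 * (LL (n-1-i+1) - LL (n-1-i+1+1)) := by
    intro i hi
    have hi' : i < n := by simpa using hi
    have e1 : n - (i+1) = n-1-i := by omega
    have e2 : n - i = n-1-i+1 := by omega
    rw [e1, e2]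
    have a1 := LL_anti (i+1) (by omega)
    have a2 := LL_anti (n-1-i+1) (by omega)
    have b1 := LL_le i
    have b2 := LL_le (n-1-i)
    have c1 := LL_ge (i+1) (by omega)
    have c2 := LL_ge (n-1-i+1) (by omega)
    generalize LL (i+1+1) = x' at *
    generalize LL (i+1) = x at *
    generalize LL (n-1-i+1+1) = y' at *
    generalize LL (n-1-i+1) = y at *
    have p1 := mul_nonneg (sub_nonneg.2 a1) (sub_nonneg.2 b2)
    have p2 := mul_nonneg (sub_nonneg.2 a2) (sub_nonneg.2 b1)
    have p3 := mul_nonneg (sub_nonneg.2 a1) (by linarith : 0 ≤ y)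
    have p4 := mul_nonneg (sub_nonneg.2 a2) (by linarith : 0 ≤ x)
    rw [abs_le]; constructor <;> nlinarith
  refine lt_of_le_of_lt (sum_le_sum h1) ?_
  rw [sum_add_distrib, sum_range_reflect (fun i => LL 1 * (LL (i+1) - LL (i+1+1))) n, ← mul_sum,
    sum_range_sub' (fun i => LL (i+1)) n]
  have := LL_ge (n+1) (by omega)
  have := LL_one
  have := LL_ge 1 (by omega)
  simp only [zero_add]
  nlinarith

lemma coef_aux (k j : ℕ) (hj : j ≤ k) :
    ((Real.pi ^ (2 * k) / (Nat.factorial (2 * k)) : ℝ) : ℂ) *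
    (((bernoulli (2 * j) : ℚ) : ℂ) * ((bernoulli (2 * k - 2 * j) : ℚ) : ℂ)
        * ((2 : ℂ) ^ (2 * j) - 1) * ((2 : ℂ) ^ (2 * k - 2 * j) - 1)
        * ((Nat.choose (2 * k) (2 * j)) : ℂ)) = ((4 * (-1)^k * (LL j * LL (k-j)) : ℝ) : ℂ) := by
  obtain ⟨m, rfl⟩ := Nat.exists_eq_add_of_le hj
  have e1 : 2 * (j+m) - 2 * j = 2 * m := by omega
  have e2 : j + m - j = m := by omega
  have e3 : 2 * (j+m) = 2*j + 2*m := by omega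
  rw [e1, e2, e3, Nat.cast_add_choose ℂ]
  unfold LL
  push_cast
  have f1 : ((2*j).factorial : ℂ) ≠ 0 := by exact_mod_cast Nat.factorial_ne_zero _
  have f2 : ((2*m).factorial : ℂ) ≠ 0 := by exact_mod_cast Nat.factorial_ne_zero _
  have f3 : ((2*j+2*m).factorial : ℂ) ≠ 0 := by exact_mod_cast Nat.factorial_ne_zero _
  have s : (-1:ℂ)^(j+m) * ((-1)^(j+1) * (-1)^(m+1)) = 1 := by
    rw [← pow_add, ← pow_add]; apply Even.neg_one_pow; exact ⟨j+m+1, by ring⟩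
  field_simp
  rw [pow_add]
  linear_combination (-4 * ((Real.pi:ℂ)^(2*j) * (Real.pi:ℂ)^(2*m) * (bernoulli (2*j):ℂ) * (bernoulli (2*m):ℂ) * (2^(2*j)-1) * (2^(2*m)-1))) * s

lemma Ypoly_eq (n : ℕ) : Ypoly (n+2) = Polynomial.C ((4 * (-1)^n : ℝ) : ℂ) * (Polynomial.X *
    ∑ i ∈ range (n+1), Polynomial.C ((LL (i+1) * LL (n-i+1) : ℝ) : ℂ) * Polynomial.X ^ i) := by
  have L0 : LL 0 = 0 := by simp [LL]
  rw [Ypoly, mul_sum]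
  have : ∀ j ∈ range (n+2+1), Polynomial.C ((Real.pi ^ (2 * (n+2)) / (Nat.factorial (2 * (n+2))) : ℝ) : ℂ) *
      (Polynomial.C (((bernoulli (2 * j) : ℚ) : ℂ) * ((bernoulli (2 * (n+2) - 2 * j) : ℚ) : ℂ)
        * ((2 : ℂ) ^ (2 * j) - 1) * ((2 : ℂ) ^ (2 * (n+2) - 2 * j) - 1)
        * ((Nat.choose (2 * (n+2)) (2 * j)) : ℂ)) * Polynomial.X ^ j) =
      Polynomial.C ((4 * (-1)^(n+2) * (LL j * LL (n+2-j)) : ℝ) : ℂ) * Polynomial.X ^ j := by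
    intro j hj
    rw [← mul_assoc, ← Polynomial.C_mul, coef_aux _ _ (by simpa [Nat.lt_succ_iff] using hj)]
  rw [sum_congr rfl this, sum_range_succ, sum_range_succ']
  simp only [L0, Nat.sub_self, mul_zero, zero_mul, Complex.ofReal_zero, Polynomial.C_0, add_zero]
  rw [mul_sum, mul_sum]
  refine sum_congr rfl fun i hi => ?_
  have hi' : i ≤ n := by simpa [Nat.lt_succ_iff] using hi
  have e : n + 2 - (i+1) = n - i + 1 := by omega
  rw [e, Complex.ofReal_mul, Polynomial.C_mul, pow_add (-1:ℝ) n 2, pow_succ Polynomial.X]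
  norm_num
  ring

end YAux

open Finset YAux in
/-- Every non-zero complex root of `Y_k` lies on the unit circle,
and all roots of `Y_k` are simple. -/
theorem Ypoly_roots_on_unit_circle_and_simple (k : ℕ) (hk : 2 ≤ k) :
    (∀ z : ℂ, (Ypoly k).IsRoot z → z ≠ 0 → ‖z‖ = 1) ∧
    (∀ z : ℂ, (Ypoly k).IsRoot z → Polynomial.rootMultiplicity z (Ypoly k) = 1) := by
  obtain ⟨n, rfl⟩ := Nat.exists_eq_add_of_le' hk
  obtain ⟨S, hS, hz⟩ := exists_roots (fun i => LL (i+1) * LL (n-i+1)) n (fun i hi => by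
    have : n - (n - i) = i := by omega
    simp only [this]; ring) (by simpa using LL_var n)
  have hY := Ypoly_eq n
  set P := ∑ i ∈ range (n+1), Polynomial.C ((LL (i+1) * LL (n-i+1) : ℝ) : ℂ) * Polynomial.X ^ i with hP
  have hP0 : P.coeff 0 ≠ 0 := by
    rw [hP, Polynomial.finsetSum_coeff]
    simp only [Polynomial.coeff_C_mul_X_pow]
    rw [sum_ite_eq]
    simp only [mem_range, Nat.succ_pos, if_true]
    have := LL_ge 1 (by omega)
    have := LL_ge (n+1) (by omega)
    rw [Complex.ofReal_ne_zero]
    simp only [zero_add, Nat.sub_zero]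
    positivity
  have hPd : P.natDegree ≤ n := by
    refine Polynomial.natDegree_sum_le_of_forall_le _ _ fun i hi => ?_
    exact (Polynomial.natDegree_C_mul_X_pow_le _ _).trans (by simpa [Nat.lt_succ_iff] using hi)
  have hPne : P ≠ 0 := by rintro h; simp [h] at hP0
  have hc : ((4 * (-1)^n : ℝ) : ℂ) ≠ 0 := by simp
  have hYne : Ypoly (n+2) ≠ 0 := by
    rw [hY]; exact mul_ne_zero (by simpa using hc) (mul_ne_zero Polynomial.X_ne_zero hPne)
  have hYd : (Ypoly (n+2)).natDegree ≤ n + 1 := by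
    rw [hY]
    refine (Polynomial.natDegree_C_mul_le _ _).trans (Polynomial.natDegree_mul_le.trans ?_)
    rw [Polynomial.natDegree_X]; omega
  have h0S : (0:ℂ) ∉ S := fun h => by simpa using (hz 0 h).1
  have hroots : (insert 0 S).val = (Ypoly (n+2)).roots := by
    refine Multiset.eq_of_le_of_card_le ?_ ?_
    · rw [Finset.val_le_iff_val_subset]
      intro z hz'
      rw [Polynomial.mem_roots hYne, hY, Polynomial.IsRoot.def]
      rcases mem_insert.1 (show z ∈ insert 0 S from hz') with rfl | h
      · simp
      · have := (hz z h).2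
        simp only [Polynomial.eval_mul, hP, Polynomial.eval_finset_sum, Polynomial.eval_C,
          Polynomial.eval_pow, Polynomial.eval_X]
        rw [this]; simp
    · refine (Polynomial.card_roots' _).trans (hYd.trans ?_)
      rw [card_val, card_insert_of_notMem h0S, hS]
  refine ⟨fun z h hne => ?_, fun z h => ?_⟩
  · have : z ∈ (insert 0 S).val := by rw [hroots]; exact (Polynomial.mem_roots hYne).2 h
    rcases mem_insert.1 (show z ∈ insert 0 S from this) with h' | h'
    · exact (hne h').elim
    · exact (hz z h').1
  · have hm : z ∈ (Ypoly (n+2)).roots := (Polynomial.mem_roots hYne).2 h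
    rw [← Polynomial.count_roots]
    exact Multiset.count_eq_one_of_mem (hroots ▸ (insert 0 S).nodup) hm
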